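/- arXiv:1710.01985 — 2 statements merged into one kernel-verified Lean document; each statement's English description precedes it below -/
import Mathlib

section
/- Let n, Π be positive integers with Π dividing n, let A be a fixed n×n real matrix, let Cart(A) be a Cartesian sketch of A, and let φ > 0. Then for any fixed bucket (h, g) ∈ {1,…,Π}², the probability that |Cart(A)_{h,g}| ≥ φ/4 is at most 16·‖A‖_F²/(Π²·φ²). -/
open ProbabilityTheory MeasureTheory
open scoped ENNReal

/-- A function `f : Fin n → Fin K` is an equipartition if every fiber has
cardinality exactly `n / K`. -/
def IsEquip (n K : ℕ) (f : Fin n → Fin K) : Prop :=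
  ∀ b : Fin K, (Finset.univ.filter fun a => f a = b).card = n / K

/-- The `(h, g)` bucket of the Cartesian sketch of the matrix `A`, as a function of the
outcome `ω = (P₁, P₂, s₁, s₂)`:
`Cart(A)_{h,g} = ∑_{P₁ x = h} ∑_{P₂ y = g} s₁ x · s₂ y · A x y`. -/
def cartEntry (n K : ℕ) (A : Matrix (Fin n) (Fin n) ℝ) (h g : Fin K)
    (ω : (Fin n → Fin K) × (Fin n → Fin K) × (Fin n → ℝ) × (Fin n → ℝ)) : ℝ :=
  ∑ x, ∑ y, if ω.1 x = h ∧ ω.2.1 y = g then ω.2.2.1 x * ω.2.2.2 y * A x y else 0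

/-- The joint law of `(P₁, P₂, s₁, s₂)`: `P₁, P₂` are independent uniform random
equipartitions, and `s₁, s₂` are random sign functions with laws `σ₁, σ₂`, all four
mutually independent. -/
noncomputable def sketchMeasure (n K : ℕ) (σ₁ σ₂ : Measure (Fin n → ℝ)) :
    Measure ((Fin n → Fin K) × (Fin n → Fin K) × (Fin n → ℝ) × (Fin n → ℝ)) :=
  (uniformOn {f | IsEquip n K f}).prod
    ((uniformOn {f | IsEquip n K f}).prod (σ₁.prod σ₂))

/-- Pairwise independent uniform signs are orthonormal in `L²`. -/
lemma integral_sign_mul_sign {n : ℕ} (σ : Measure (Fin n → ℝ)) [IsProbabilityMeasure σ]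
    (hval : ∀ᵐ s ∂σ, ∀ i, s i = 1 ∨ s i = -1)
    (hpair : ∀ i j : Fin n, i ≠ j → ∀ a b : ℝ, (a = 1 ∨ a = -1) → (b = 1 ∨ b = -1) →
      σ {s | s i = a ∧ s j = b} = 1 / 4) (i j : Fin n) :
    ∫ s, s i * s j ∂σ = if i = j then 1 else 0 := by
  split_ifs with hij
  · subst hij
    have hone : (fun s : Fin n → ℝ => s i * s i) =ᵐ[σ] fun _ => 1 := by
      filter_upwards [hval] with s hs
      rcases hs i with h | h <;> simp [h]
    simp [integral_congr_ae hone]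
  · let S : ℝ → ℝ → Set (Fin n → ℝ) := fun a b => {s | s i = a ∧ s j = b}
    have hS : ∀ a b, MeasurableSet (S a b) := fun a b =>
      (measurableSet_eq_fun (measurable_pi_apply i) measurable_const).inter
        (measurableSet_eq_fun (measurable_pi_apply j) measurable_const)
    have hreal : ∀ a b : ℝ, (a = 1 ∨ a = -1) → (b = 1 ∨ b = -1) →
        ∫ s, (S a b).indicator (1 : (Fin n → ℝ) → ℝ) s ∂σ = 1 / 4 := by
      intro a b ha hb
      rw [integral_indicator_one (hS a b), measureReal_def, hpair i j hij a b ha hb]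
      simp
    have hint : ∀ a b, Integrable ((S a b).indicator (1 : (Fin n → ℝ) → ℝ)) σ := fun a b =>
      (integrable_const (1 : ℝ)).indicator (hS a b)
    have hadd : ∀ a b c d, Integrable (fun s => (S a b).indicator (1 : (Fin n → ℝ) → ℝ) s +
        (S c d).indicator 1 s) σ := fun a b c d => (hint a b).add (hint c d)
    have hdecomp : (fun s : Fin n → ℝ => s i * s j) =ᵐ[σ] fun s =>
        ((S 1 1).indicator (1 : (Fin n → ℝ) → ℝ) s + (S (-1) (-1)).indicator 1 s) -
          ((S 1 (-1)).indicator 1 s + (S (-1) 1).indicator 1 s) := by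
      filter_upwards [hval] with s hs
      rcases hs i with h | h <;> rcases hs j with h' | h' <;>
        norm_num [S, Set.indicator_apply, h, h']
    rw [integral_congr_ae hdecomp,
      integral_sub (hadd _ _ _ _) (hadd _ _ _ _),
      integral_add (hint _ _) (hint _ _), integral_add (hint _ _) (hint _ _),
      hreal 1 1 (by simp) (by simp), hreal (-1) (-1) (by simp) (by simp),
      hreal 1 (-1) (by simp) (by simp), hreal (-1) 1 (by simp) (by simp)]
    norm_num

lemma integrable_sign_mul_sign {n : ℕ} (σ : Measure (Fin n → ℝ)) [IsProbabilityMeasure σ]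
    (hval : ∀ᵐ s ∂σ, ∀ i, s i = 1 ∨ s i = -1) (i j : Fin n) :
    Integrable (fun s : Fin n → ℝ => s i * s j) σ := by
  refine Integrable.of_bound (C := 1)
    ((measurable_pi_apply i).mul (measurable_pi_apply j)).aestronglyMeasurable ?_
  filter_upwards [hval] with s hs
  rcases hs i with h | h <;> rcases hs j with h' | h' <;> simp [h, h']

lemma IsEquip.perm_comp {n K : ℕ} {f : Fin n → Fin K} (hf : IsEquip n K f)
    (e : Equiv.Perm (Fin K)) : IsEquip n K (e ∘ f) := by
  intro b
  rw [← hf (e.symm b)]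
  simp [Equiv.eq_symm_apply]

instance isFiniteMeasure_uniformOn_equip (n K : ℕ) :
    IsFiniteMeasure (uniformOn {f | IsEquip n K f}) := by
  unfold uniformOn
  infer_instance

lemma uniformOn_equip_apply_eq (n K : ℕ) (x : Fin n) (h h' : Fin K) :
    uniformOn {f | IsEquip n K f} {f | f x = h} =
      uniformOn {f | IsEquip n K f} {f | f x = h'} := by
  have hE : MeasurableSet {f | IsEquip n K f} := Set.Finite.measurableSet (Set.toFinite _)
  rw [uniformOn, cond_apply hE, cond_apply hE]
  congr 1
  rw [← Measure.count_injective_image (f := fun f : Fin n → Fin K => Equiv.swap h h' ∘ f)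
    (Equiv.swap h h').injective.comp_left]
  congr 1
  ext f
  constructor
  · rintro ⟨f, ⟨hf, hx⟩, rfl⟩
    refine ⟨IsEquip.perm_comp hf _, ?_⟩
    simp only [Set.mem_ofPred_eq] at hx
    simp [hx]
  · rintro ⟨hf, hx⟩
    simp only [Set.mem_ofPred_eq] at hx
    refine ⟨Equiv.swap h h' ∘ f, ⟨IsEquip.perm_comp hf _, by simp [hx]⟩, ?_⟩
    ext a
    simp

/-- A uniform random equipartition sends a given point to a given class with probability at
most `1 / K`. -/
lemma uniformOn_equip_real_le (n K : ℕ) (hK : 0 < K) (x : Fin n) (h : Fin K) :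
    (uniformOn {f | IsEquip n K f}).real {f | f x = h} ≤ 1 / K := by
  set μ := uniformOn {f | IsEquip n K f} with hμ
  have hsum : ∑ b : Fin K, μ.real {f | f x = b} = μ.real Set.univ := by
    rw [← measureReal_biUnion_finset]
    · congr 1
      ext f
      simp
    · intro b _ b' _ hbb'
      refine Set.disjoint_left.2 fun f hf hf' => hbb' ?_
      exact hf.symm.trans hf'
    · exact fun b _ => Set.Finite.measurableSet (Set.toFinite _)
  have hconst : ∀ b : Fin K, μ.real {f | f x = b} = μ.real {f | f x = h} := fun b => by
    rw [measureReal_def, measureReal_def, hμ, uniformOn_equip_apply_eq n K x b h]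
  have hone : μ.real Set.univ ≤ 1 := by
    rw [measureReal_def, hμ, uniformOn]
    exact ENNReal.toReal_le_of_le_ofReal zero_le_one (by simpa using prob_le_one)
  simp only [hconst, Finset.sum_const, Finset.card_univ, Fintype.card_fin, nsmul_eq_mul] at hsum
  rw [le_div_iff₀ (by exact_mod_cast hK)]
  linarith

/-- The indicator that both `x` and `x'` are placed in the class `h`. -/
def bothIn {n K : ℕ} (h : Fin K) (x x' : Fin n) (f : Fin n → Fin K) : ℝ :=
  if f x = h ∧ f x' = h then 1 else 0

lemma integral_bothIn_self_le (n K : ℕ) (hK : 0 < K) (h : Fin K) (x : Fin n) :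
    ∫ f, bothIn h x x f ∂(uniformOn {f | IsEquip n K f}) ≤ 1 / K := by
  have heq : bothIn (n := n) h x x = Set.indicator {f | f x = h} 1 := by
    ext f
    simp [bothIn, Set.indicator_apply]
  rw [heq, integral_indicator_one (Set.Finite.measurableSet (Set.toFinite _))]
  exact uniformOn_equip_real_le n K hK x h

lemma integral_bothIn_nonneg (n K : ℕ) (h : Fin K) (x x' : Fin n) :
    0 ≤ ∫ f, bothIn h x x' f ∂(uniformOn {f | IsEquip n K f}) :=
  integral_nonneg fun f => by unfold bothIn; positivity

lemma cartEntry_sq (n K : ℕ) (A : Matrix (Fin n) (Fin n) ℝ) (h g : Fin K)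
    (ω : (Fin n → Fin K) × (Fin n → Fin K) × (Fin n → ℝ) × (Fin n → ℝ)) :
    cartEntry n K A h g ω ^ 2 = ∑ x, ∑ y, ∑ x', ∑ y', A x y * A x' y' *
      (bothIn h x x' ω.1 * (bothIn g y y' ω.2.1 *
        ((ω.2.2.1 x * ω.2.2.1 x') * (ω.2.2.2 y * ω.2.2.2 y')))) := by
  rw [cartEntry, sq, Finset.sum_mul]
  refine Finset.sum_congr rfl fun x _ => ?_
  rw [Finset.sum_mul]
  refine Finset.sum_congr rfl fun y _ => ?_
  rw [Finset.mul_sum]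
  refine Finset.sum_congr rfl fun x' _ => ?_
  rw [Finset.mul_sum]
  refine Finset.sum_congr rfl fun y' _ => ?_
  by_cases h1 : ω.1 x = h <;> by_cases h2 : ω.1 x' = h <;> by_cases h3 : ω.2.1 y = g <;>
    by_cases h4 : ω.2.1 y' = g <;> simp [bothIn, h1, h2, h3, h4]
  ring

/-- For a fixed `n × n` matrix `A`, a Cartesian sketch built from
independent uniform random equipartitions and pairwise independent uniform random signs,
a fixed bucket `(h, g)` and `φ > 0`, the probability that `|Cart(A)_{h,g}| ≥ φ/4` is at
most `16‖A‖_F² / (K²φ²)`. -/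
theorem cart_sketch_tail_bound (n K : ℕ) (hn : 0 < n) (hK : 0 < K) (hdvd : K ∣ n)
    (A : Matrix (Fin n) (Fin n) ℝ) (φ : ℝ) (hφ : 0 < φ)
    (σ₁ σ₂ : Measure (Fin n → ℝ)) [IsProbabilityMeasure σ₁] [IsProbabilityMeasure σ₂]
    (hval₁ : ∀ᵐ s ∂σ₁, ∀ i, s i = 1 ∨ s i = -1)
    (hval₂ : ∀ᵐ s ∂σ₂, ∀ i, s i = 1 ∨ s i = -1)
    (huni₁ : ∀ i, σ₁ {s | s i = 1} = 1 / 2)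
    (huni₂ : ∀ i, σ₂ {s | s i = 1} = 1 / 2)
    (hpair₁ : ∀ i j : Fin n, i ≠ j → ∀ a b : ℝ, (a = 1 ∨ a = -1) → (b = 1 ∨ b = -1) →
      σ₁ {s | s i = a ∧ s j = b} = 1 / 4)
    (hpair₂ : ∀ i j : Fin n, i ≠ j → ∀ a b : ℝ, (a = 1 ∨ a = -1) → (b = 1 ∨ b = -1) →
      σ₂ {s | s i = a ∧ s j = b} = 1 / 4)
    (h g : Fin K) :
    sketchMeasure n K σ₁ σ₂ {ω | φ / 4 ≤ |cartEntry n K A h g ω|} ≤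
      ENNReal.ofReal (16 * (∑ x, ∑ y, A x y ^ 2) / (K ^ 2 * φ ^ 2)) := by
  set E := uniformOn {f | IsEquip n K f} with hE
  have hbi : ∀ (b : Fin K) (x x' : Fin n), Integrable (bothIn b x x') E := fun b x x' =>
    Integrable.of_finite
  have hterm : ∀ x y x' y', Integrable
      (fun ω : (Fin n → Fin K) × (Fin n → Fin K) × (Fin n → ℝ) × (Fin n → ℝ) =>
        A x y * A x' y' * (bothIn h x x' ω.1 * (bothIn g y y' ω.2.1 *
          ((ω.2.2.1 x * ω.2.2.1 x') * (ω.2.2.2 y * ω.2.2.2 y')))))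
      (sketchMeasure n K σ₁ σ₂) := fun x y x' y' =>
    ((hbi h x x').mul_prod ((hbi g y y').mul_prod
      ((integrable_sign_mul_sign σ₁ hval₁ x x').mul_prod
        (integrable_sign_mul_sign σ₂ hval₂ y y')))).const_mul _
  have hvalue : ∀ x y x' y', ∫ ω, A x y * A x' y' * (bothIn h x x' ω.1 * (bothIn g y y' ω.2.1 *
      ((ω.2.2.1 x * ω.2.2.1 x') * (ω.2.2.2 y * ω.2.2.2 y')))) ∂(sketchMeasure n K σ₁ σ₂) =
      A x y * A x' y' * ((∫ f, bothIn h x x' f ∂E) * ((∫ f, bothIn g y y' f ∂E) *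
        ((if x = x' then 1 else 0) * (if y = y' then 1 else 0)))) := by
    intro x y x' y'
    rw [integral_const_mul, ← integral_sign_mul_sign σ₁ hval₁ hpair₁ x x',
      ← integral_sign_mul_sign σ₂ hval₂ hpair₂ y y', ← integral_prod_mul, ← integral_prod_mul,
      ← integral_prod_mul]
    rfl
  have hsq : ∫ ω, cartEntry n K A h g ω ^ 2 ∂(sketchMeasure n K σ₁ σ₂) =
      ∑ x, ∑ y, A x y ^ 2 * ((∫ f, bothIn h x x f ∂E) * (∫ f, bothIn g y y f ∂E)) := by
    simp only [cartEntry_sq]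
    rw [integral_finsetSum _ fun x _ => integrable_finsetSum _ fun y _ =>
      integrable_finsetSum _ fun x' _ => integrable_finsetSum _ fun y' _ => hterm x y x' y']
    refine Finset.sum_congr rfl fun x _ => ?_
    rw [integral_finsetSum _ fun y _ =>
      integrable_finsetSum _ fun x' _ => integrable_finsetSum _ fun y' _ => hterm x y x' y']
    refine Finset.sum_congr rfl fun y _ => ?_
    rw [integral_finsetSum _ fun x' _ => integrable_finsetSum _ fun y' _ => hterm x y x' y']
    simp_rw [integral_finsetSum _ fun y' _ => hterm x y _ y', hvalue]
    rw [Finset.sum_eq_single x, Finset.sum_eq_single y]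
    · simp [sq]
    · intro y' _ hy
      simp [hy.symm]
    · simp
    · intro x' _ hx
      simp [hx.symm]
    · simp
  have hint : Integrable (fun ω => cartEntry n K A h g ω ^ 2) (sketchMeasure n K σ₁ σ₂) := by
    simp only [cartEntry_sq]
    exact integrable_finsetSum _ fun x _ => integrable_finsetSum _ fun y _ =>
      integrable_finsetSum _ fun x' _ => integrable_finsetSum _ fun y' _ => hterm x y x' y'
  have hmoment : ∫ ω, cartEntry n K A h g ω ^ 2 ∂(sketchMeasure n K σ₁ σ₂) ≤
      (∑ x, ∑ y, A x y ^ 2) / K ^ 2 := by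
    rw [hsq, Finset.sum_div]
    refine Finset.sum_le_sum fun x _ => ?_
    rw [Finset.sum_div]
    refine Finset.sum_le_sum fun y _ => ?_
    calc A x y ^ 2 * ((∫ f, bothIn h x x f ∂E) * (∫ f, bothIn g y y f ∂E))
        ≤ A x y ^ 2 * ((1 / K) * (1 / K)) := by
          gcongr
          · exact integral_bothIn_nonneg n K g y y
          · exact integral_bothIn_self_le n K hK h x
          · exact integral_bothIn_self_le n K hK g y
      _ = A x y ^ 2 / K ^ 2 := by ring
  have hfin : IsFiniteMeasure (sketchMeasure n K σ₁ σ₂) := by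
    unfold sketchMeasure
    infer_instance
  have hmarkov := mul_meas_ge_le_integral_of_nonneg
    (Filter.Eventually.of_forall fun ω => sq_nonneg (cartEntry n K A h g ω)) hint ((φ / 4) ^ 2)
  have hset : {ω | φ / 4 ≤ |cartEntry n K A h g ω|} =
      {ω | (φ / 4) ^ 2 ≤ cartEntry n K A h g ω ^ 2} := by
    ext ω
    rw [Set.mem_ofPred_eq, Set.mem_ofPred_eq, sq_le_sq, abs_of_pos (by positivity : 0 < φ / 4)]
  rw [hset, ← ofReal_measureReal]
  refine ENNReal.ofReal_le_ofReal ?_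
  have hK' : (0 : ℝ) < K := by exact_mod_cast hK
  calc _ ≤ (∑ x, ∑ y, A x y ^ 2) / K ^ 2 / (φ / 4) ^ 2 := by
        rw [le_div_iff₀ (by positivity), mul_comm]
        exact hmarkov.trans hmoment
    _ = _ := by
        field_simp
        norm_num
end

section
/- Let n, Π be positive integers with Π dividing n and n ≥ 2, let v₁, …, v_n ∈ ℝ^p be unit vectors, let P : {1,…,n} → {1,…,Π} be a uniform random equipartition, and let s₁, …, s_n be mutually independent uniform random signs in {−1,+1}, independent of P. Fix h ∈ {1,…,Π} and λ ∈ (0, 1]. Then the probability that ‖Σ_{i : P(i) = h} s_i·v_i‖₂² ≥ (n/Π)·(1 + 22·λ^{−1/2}) is at most λ/121. -/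
open MeasureTheory ProbabilityTheory
open scoped RealInnerProductSpace ENNReal

section SignedSums

variable {ι E : Type*} [DecidableEq ι] [NormedAddCommGroup E] [InnerProductSpace ℝ E]

/-- The real sign `±1` encoded by a Boolean. -/
def boolSign (b : Bool) : ℝ := if b then 1 else -1

lemma boolSign_not (b : Bool) : boolSign (!b) = -boolSign b := by
  cases b <;> simp [boolSign]

lemma boolSign_sq (b : Bool) : boolSign b ^ 2 = 1 := by
  cases b <;> simp [boolSign]

/-- The signed sum of the vectors `v i`, `i ∈ S`, with signs encoded by `ε`. -/
def signedSum (v : ι → E) (S : Finset ι) (ε : ι → Bool) : E :=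
  ∑ i ∈ S, boolSign (ε i) • v i

/-- Flipping the sign at `a` as a permutation of sign patterns. -/
def flipAt (a : ι) : Equiv.Perm (ι → Bool) :=
  Function.Involutive.toPerm (fun ε => Function.update ε a (!ε a)) fun ε => by simp

lemma flipAt_apply (a : ι) (ε : ι → Bool) : flipAt a ε = Function.update ε a (!ε a) := rfl

lemma signedSum_flipAt (v : ι → E) {S : Finset ι} {a : ι} (ha : a ∉ S) (ε : ι → Bool) :
    signedSum v S (flipAt a ε) = signedSum v S ε := by
  refine Finset.sum_congr rfl fun i hi => ?_
  rw [flipAt_apply, Function.update_of_ne (ne_of_mem_of_not_mem hi ha)]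

lemma norm_sq_signedSum_insert {v : ι → E} (hv : ∀ i, ‖v i‖ = 1) {S : Finset ι} {a : ι}
    (ha : a ∉ S) (ε : ι → Bool) :
    ‖signedSum v (insert a S) ε‖ ^ 2 =
      ‖signedSum v S ε‖ ^ 2 + 1 + boolSign (ε a) * (2 * ⟪v a, signedSum v S ε⟫) := by
  have hins : signedSum v (insert a S) ε = boolSign (ε a) • v a + signedSum v S ε :=
    Finset.sum_insert ha
  rw [hins, norm_add_sq_real, norm_smul, mul_pow, Real.norm_eq_abs, sq_abs, boolSign_sq, hv,
    real_inner_smul_left]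
  ring

variable [Fintype ι]

lemma sum_boolSign_mul_eq_zero (a : ι) (g : (ι → Bool) → ℝ)
    (hg : ∀ ε, g (flipAt a ε) = g ε) : ∑ ε, boolSign (ε a) * g ε = 0 := by
  have key := Equiv.sum_comp (flipAt a) fun ε => boolSign (ε a) * g ε
  simp only [hg] at key
  simp only [flipAt_apply, Function.update_self, boolSign_not, neg_mul,
    Finset.sum_neg_distrib] at key
  linarith

lemma sum_norm_sq_signedSum {v : ι → E} (hv : ∀ i, ‖v i‖ = 1) (S : Finset ι) :
    ∑ ε, ‖signedSum v S ε‖ ^ 2 = Fintype.card (ι → Bool) * (S.card : ℝ) := by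
  induction S using Finset.induction_on with
  | empty => simp [signedSum]
  | insert a S ha ih =>
    simp only [norm_sq_signedSum_insert hv ha, Finset.sum_add_distrib, ih]
    rw [sum_boolSign_mul_eq_zero a _ fun ε => by rw [signedSum_flipAt v ha],
      Finset.card_insert_of_notMem ha]
    simp only [Finset.sum_const, Finset.card_univ, nsmul_eq_mul]
    push_cast
    ring

lemma sum_sq_norm_sq_signedSum_sub_card_le {v : ι → E} (hv : ∀ i, ‖v i‖ = 1) (S : Finset ι) :
    ∑ ε, (‖signedSum v S ε‖ ^ 2 - S.card) ^ 2 ≤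
      Fintype.card (ι → Bool) * (2 * (S.card : ℝ) ^ 2) := by
  induction S using Finset.induction_on with
  | empty => simp [signedSum]
  | insert a S ha ih =>
    have hpt : ∀ ε, (‖signedSum v (insert a S) ε‖ ^ 2 - (insert a S).card) ^ 2 ≤
        (‖signedSum v S ε‖ ^ 2 - S.card) ^ 2 + 4 * ‖signedSum v S ε‖ ^ 2 +
          boolSign (ε a) *
            (4 * (‖signedSum v S ε‖ ^ 2 - S.card) * ⟪v a, signedSum v S ε⟫) := by
      intro ε
      have hcs : ⟪v a, signedSum v S ε⟫ ^ 2 ≤ ‖signedSum v S ε‖ ^ 2 := by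
        refine sq_le_sq.mpr ?_
        simpa [hv a] using abs_real_inner_le_norm (v a) (signedSum v S ε)
      rw [norm_sq_signedSum_insert hv ha, Finset.card_insert_of_notMem ha]
      push_cast
      linear_combination 4 * hcs + 4 * ⟪v a, signedSum v S ε⟫ ^ 2 * boolSign_sq (ε a)
    refine (Finset.sum_le_sum fun ε _ => hpt ε).trans ?_
    rw [Finset.sum_add_distrib, Finset.sum_add_distrib, ← Finset.mul_sum,
      sum_norm_sq_signedSum hv,
      sum_boolSign_mul_eq_zero a _ fun ε => by rw [signedSum_flipAt v ha],
      Finset.card_insert_of_notMem ha]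
    push_cast
    have hN : (0 : ℝ) ≤ Fintype.card (ι → Bool) := Nat.cast_nonneg _
    nlinarith

/-- Chebyshev's inequality for the squared norm of a signed sum of unit vectors. -/
lemma card_norm_sq_signedSum_ge_mul_sq_le {v : ι → E} (hv : ∀ i, ‖v i‖ = 1) {S : Finset ι}
    (hS : 0 < S.card) {t : ℝ} (ht : 0 ≤ t) :
    ((Finset.univ.filter fun ε => (S.card : ℝ) * (1 + t) ≤ ‖signedSum v S ε‖ ^ 2).card : ℝ)
      * t ^ 2 ≤ 2 * Fintype.card (ι → Bool) := by
  set T := Finset.univ.filter fun ε => (S.card : ℝ) * (1 + t) ≤ ‖signedSum v S ε‖ ^ 2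
  have hm : (0 : ℝ) < S.card := Nat.cast_pos.mpr hS
  have hT : (T.card : ℝ) * (S.card * t) ^ 2 ≤
      Fintype.card (ι → Bool) * (2 * (S.card : ℝ) ^ 2) := by
    calc (T.card : ℝ) * (S.card * t) ^ 2
        = ∑ _ε ∈ T, (S.card * t) ^ 2 := by rw [Finset.sum_const, nsmul_eq_mul]
      _ ≤ ∑ ε ∈ T, (‖signedSum v S ε‖ ^ 2 - S.card) ^ 2 := by
          refine Finset.sum_le_sum fun ε hε => pow_le_pow_left₀ (by positivity) ?_ 2
          have := (Finset.mem_filter.mp hε).2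
          linarith
      _ ≤ ∑ ε, (‖signedSum v S ε‖ ^ 2 - S.card) ^ 2 :=
          Finset.sum_le_univ_sum_of_nonneg fun ε => sq_nonneg _
      _ ≤ _ := sum_sq_norm_sq_signedSum_sub_card_le hv S
  refine le_of_mul_le_mul_right ?_ (pow_pos hm 2)
  linarith

lemma uniform_signs_norm_sq_signedSum_ge_le {v : ι → E} (hv : ∀ i, ‖v i‖ = 1) {S : Finset ι}
    (hS : 0 < S.card) {t : ℝ} (ht : 0 < t) :
    (PMF.uniformOfFintype (ι → Bool)).toMeasure
      {ε | (S.card : ℝ) * (1 + t) ≤ ‖signedSum v S ε‖ ^ 2} ≤ ENNReal.ofReal (2 / t ^ 2) := by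
  have hcard := card_norm_sq_signedSum_ge_mul_sq_le hv hS ht.le
  have hN : (0 : ℝ) < Fintype.card (ι → Bool) := Nat.cast_pos.mpr Fintype.card_pos
  rw [PMF.toMeasure_uniformOfFintype_apply _ (Set.toFinite _).measurableSet,
    Fintype.card_subtype, ← ENNReal.ofReal_natCast, ← ENNReal.ofReal_natCast,
    ← ENNReal.ofReal_div_of_pos hN]
  refine ENNReal.ofReal_le_ofReal ?_
  rw [div_le_div_iff₀ hN (by positivity)]
  exact hcard

end SignedSums

/-- If almost every section of a measurable set has measure at most `c`, then so does the set
under a product with a measure of total mass at most one. -/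
lemma prod_apply_le_of_ae_le {α β : Type*} [MeasurableSpace α] [MeasurableSpace β]
    {μ : Measure α} {ν : Measure β} [SFinite ν] (hμ : μ Set.univ ≤ 1) {A : Set (α × β)}
    (hA : MeasurableSet A) {c : ℝ≥0∞} (hc : ∀ᵐ x ∂μ, ν (Prod.mk x ⁻¹' A) ≤ c) :
    μ.prod ν A ≤ c := by
  rw [Measure.prod_apply hA]
  calc ∫⁻ x, ν (Prod.mk x ⁻¹' A) ∂μ ≤ ∫⁻ _, c ∂μ := lintegral_mono_ae hc
    _ = c * μ Set.univ := lintegral_const c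
    _ ≤ c := mul_le_of_le_one_right' hμ

/-- Let `v₁, …, v_n ∈ ℝ^p` be unit vectors, `P : [n] → [K]` a uniform
random equipartition (`K ∣ n`, `n ≥ 2`) and `s₁, …, s_n` mutually independent uniform
random signs, independent of `P` (modeled by the product of the uniform measure on
equipartitions with the uniform measure on `{−1,+1}^n`, encoded via `Fin n → Bool` with
`true ↦ 1`, `false ↦ −1`; this realizes exactly the stated joint law).  Fix `h` and
`λ ∈ (0, 1]`.  Then `ℙ(‖∑_{i : P i = h} s_i • v_i‖² ≥ (n/K)(1 + 22·λ^{−1/2})) ≤ λ/121`. -/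
theorem bucket_signed_sum_sq_norm_tail_bound (n K p : ℕ) (hn : 2 ≤ n) (hK : 0 < K)
    (hdvd : K ∣ n) (v : Fin n → EuclideanSpace ℝ (Fin p)) (hv : ∀ i, ‖v i‖ = 1)
    (h : Fin K) (lam : ℝ) (hlam0 : 0 < lam) (hlam1 : lam ≤ 1)
    (μ : Measure ((Fin n → Fin K) × (Fin n → Bool)))
    (hμ : μ = (uniformOn {f : Fin n → Fin K | IsEquip n K f}).prod
      (PMF.uniformOfFintype (Fin n → Bool)).toMeasure)
    (X : (Fin n → Fin K) × (Fin n → Bool) → ℝ)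
    (hX : X = fun ω =>
      ‖∑ i ∈ Finset.univ.filter fun i => ω.1 i = h,
          (if ω.2 i then (1 : ℝ) else -1) • v i‖ ^ 2) :
    μ {ω | (n : ℝ) / K * (1 + 22 / Real.sqrt lam) ≤ X ω} ≤ ENNReal.ofReal (lam / 121) := by
  subst hμ hX
  have hmK : 0 < n / K := Nat.div_pos (Nat.le_of_dvd (by omega) hdvd) hK
  have hcast : ((n / K : ℕ) : ℝ) = n / K := Nat.cast_div hdvd (by exact_mod_cast hK.ne')
  have hsqrt : 0 < Real.sqrt lam := Real.sqrt_pos.mpr hlam0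
  refine prod_apply_le_of_ae_le ?_ (Set.toFinite _).measurableSet ?_
  · exact prob_le_one
  · have hmem : ∀ᵐ f ∂uniformOn {f : Fin n → Fin K | IsEquip n K f}, IsEquip n K f :=
      ae_cond_mem (Set.toFinite _).measurableSet
    filter_upwards [hmem] with f hf
    have hS := hf h
    have key := uniform_signs_norm_sq_signedSum_ge_le hv (hS ▸ hmK)
      (div_pos (by norm_num : (0 : ℝ) < 22) hsqrt)
    rw [hS, hcast] at key
    refine key.trans (ENNReal.ofReal_le_ofReal ?_)
    rw [div_pow, Real.sq_sqrt hlam0.le, div_div_eq_mul_div]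
    linarith
end
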